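/- Let n ≥ 2. If n is a power of 2, then n · Σ_{π ∈ 𝔠_n} t^{lpk(π)} = P_n^{lpk}(t) − (1−t)^{n/2}; otherwise, n · Σ_{π ∈ 𝔠_n} t^{lpk(π)} = Σ_{d ∣ n, d odd} μ(d) (1−t)^{(n−n/d)/2} P_{n/d}^{lpk}(t), as identities of polynomials in ℚ[t], where P_m^{lpk}(t) = Σ_{π ∈ S_m} t^{lpk(π)}. (For d an odd divisor of n, the exponent (n−n/d)/2 = (n/d)(d−1)/2 is a nonnegative integer.) -/

import Mathlib

open scoped Classical

noncomputable section

def oneLine (n : ℕ) (π : Equiv.Perm (Fin n)) (i : ℕ) : ℕ :=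
  if h : 1 ≤ i ∧ i ≤ n then (π ⟨i - 1, by omega⟩).val + 1 else 0

def des (n : ℕ) (π : Equiv.Perm (Fin n)) : ℕ :=
  ((Finset.Icc 1 (n - 1)).filter fun i => oneLine n π (i + 1) < oneLine n π i).card

def pk (n : ℕ) (π : Equiv.Perm (Fin n)) : ℕ :=
  ((Finset.Icc 2 (n - 1)).filter fun i =>
    oneLine n π (i - 1) < oneLine n π i ∧ oneLine n π (i + 1) < oneLine n π i).card

def lpk (n : ℕ) (π : Equiv.Perm (Fin n)) : ℕ :=
  ((Finset.Icc 1 (n - 1)).filter fun i =>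
    oneLine n π (i - 1) < oneLine n π i ∧ oneLine n π (i + 1) < oneLine n π i).card

def pval (n : ℕ) (π : Equiv.Perm (Fin n)) : ℕ :=
  ((Finset.Icc 2 (n - 1)).filter fun i =>
    oneLine n π i < oneLine n π (i - 1) ∧ oneLine n π i < oneLine n π (i + 1)).card

def udr (n : ℕ) (π : Equiv.Perm (Fin n)) : ℕ := lpk n π + pval n π + 1

def fullCycleType (n : ℕ) (π : Equiv.Perm (Fin n)) : Multiset ℕ :=
  π.cycleType + Multiset.replicate (n - π.support.card) 1

def numCycles (n : ℕ) (π : Equiv.Perm (Fin n)) : ℕ := Multiset.card (fullCycleType n π)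

def numOddCycles (n : ℕ) (π : Equiv.Perm (Fin n)) : ℕ :=
  Multiset.card ((fullCycleType n π).filter fun p => p % 2 = 1)

def IsCyclicPerm (n : ℕ) (π : Equiv.Perm (Fin n)) : Prop :=
  fullCycleType n π = {n}

def cyclicSet (n : ℕ) : Finset (Equiv.Perm (Fin n)) :=
  Finset.univ.filter fun π => IsCyclicPerm n π

def invSet (n : ℕ) : Finset (Equiv.Perm (Fin n)) :=
  Finset.univ.filter fun π => π ^ 2 = 1

def eulerianA (m : ℕ) : Polynomial ℚ :=
  ∑ π : Equiv.Perm (Fin m), Polynomial.X ^ (des m π + 1)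

def peakP (m : ℕ) : Polynomial ℚ :=
  ∑ π : Equiv.Perm (Fin m), Polynomial.X ^ (pk m π + 1)

def leftPeakP (m : ℕ) : Polynomial ℚ :=
  ∑ π : Equiv.Perm (Fin m), Polynomial.X ^ (lpk m π)

def cnk (n k : ℕ) : ℕ :=
  (Finset.univ.filter fun π : Equiv.Perm (Fin n) =>
    (∀ p ∈ fullCycleType n π, ¬ (4 ∣ p)) ∧ numCycles n (π ^ 2) = k).card

def bnk (n k : ℕ) : ℕ :=
  (Finset.univ.filter fun π : Equiv.Perm (Fin n) => numCycles n (π ^ 2) = k).card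

def dnk (n k : ℕ) : ℕ :=
  (Finset.univ.filter fun π : Equiv.Perm (Fin n) => numOddCycles n (π ^ 2) = k).card

def eps (a : ℕ) : ℤ := (-1) ^ a

def Compat {n N : ℕ} (π : Equiv.Perm (Fin n)) (f : Fin n → Fin N) : Prop :=
  ∀ x y : Fin n, x < y → f x < f y ∨
    (f x = f y ∧ eps (f x) * ((π x : ℕ) : ℤ) < eps (f x) * ((π y : ℕ) : ℤ))

def Om (n k : ℕ) (π : Equiv.Perm (Fin n)) : ℕ :=
  (Finset.univ.filter fun f : Fin n → Fin (2 * k + 1) => Compat π f).card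

def cc (asc : ℕ → Prop) : ℕ → ℕ → ℚ
  | 0, j => if j = 0 then 1 else 0
  | i + 1, j => (∑ l ∈ Finset.range j, cc asc i l) + if (Even j ↔ asc i) then cc asc i j else 0

def EE (asc : ℕ → Prop) (i : ℕ) : PowerSeries ℚ := PowerSeries.mk fun m => cc asc i (2 * m)
def OO (asc : ℕ → Prop) (i : ℕ) : PowerSeries ℚ :=
  PowerSeries.mk fun m => if m = 0 then 0 else cc asc i (2 * m - 1)

def LL (asc : ℕ → Prop) (i : ℕ) : ℕ :=
  ((Finset.Icc 1 (i - 1)).filter fun l => asc (l - 1) ∧ ¬ asc l).card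

open PowerSeries in
theorem EE_asc (asc : ℕ → Prop) (i : ℕ) (h : asc i) :
    (1 - X) * EE asc (i + 1) = EE asc i + OO asc i ∧ OO asc (i + 1) = X * EE asc (i + 1) := by
  constructor
  · ext m
    rw [sub_mul, one_mul]
    rcases m with _ | m
    · simp [EE, OO, cc, h]
    · simp only [EE, OO, map_sub, map_add, coeff_succ_X_mul, coeff_mk, cc, h, iff_true,
        show 2 * (m + 1) = 2 * m + 1 + 1 by ring, Finset.sum_range_succ]
      have : Even (2 * m + 1 + 1) := ⟨m + 1, by ring⟩
      simp [this]
      ring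
  · ext m
    rcases m with _ | m
    · simp [OO]
    · simp only [EE, OO, coeff_succ_X_mul, coeff_mk, cc, h, iff_true,
        show 2 * (m + 1) - 1 = 2 * m + 1 by omega, Finset.sum_range_succ]
      simp

open PowerSeries in
theorem EE_desc (asc : ℕ → Prop) (i : ℕ) (h : ¬ asc i) :
    (1 - X) * EE asc (i + 1) = X * EE asc i + OO asc i ∧ OO asc (i + 1) = EE asc (i + 1) := by
  constructor
  · ext m
    rw [sub_mul, one_mul]
    rcases m with _ | m
    · simp [EE, OO, cc, h]
    · simp only [EE, OO, map_sub, map_add, coeff_succ_X_mul, coeff_mk, cc, h, iff_false,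
        show 2 * (m + 1) = 2 * m + 1 + 1 by ring, Finset.sum_range_succ]
      have : Even (2 * m + 1 + 1) := ⟨m + 1, by ring⟩
      simp [this]
      ring
  · ext m
    rcases m with _ | m
    · simp [OO, EE, cc, h]
    · simp only [EE, OO, coeff_mk, cc, h, iff_false,
        show 2 * (m + 1) = 2 * m + 1 + 1 by ring, Finset.sum_range_succ]
      have : Even (2 * m + 1 + 1) := ⟨m + 1, by ring⟩
      simp [this, Finset.sum_range_succ]

theorem LL_succ (asc : ℕ → Prop) (i : ℕ) :
    LL asc (i + 2) = LL asc (i + 1) + if asc i ∧ ¬ asc (i + 1) then 1 else 0 := by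
  unfold LL
  simp only [Nat.add_sub_cancel, show i + 2 - 1 = i + 1 by omega]
  rw [← Finset.insert_Icc_right_eq_Icc_add_one (by omega : 1 ≤ i + 1), Finset.filter_insert]
  simp only [Nat.add_sub_cancel]
  split_ifs with h
  · rw [Finset.card_insert_of_notMem (by simp)]
  · rfl

open PowerSeries in
theorem SS_formula (asc : ℕ → Prop) (h0 : asc 0) (i : ℕ) :
    ((1 - X) ^ (i + 1) * (1 + X) ^ (2 * LL asc (i + 1)) * (EE asc (i + 1) + OO asc (i + 1))
      = (1 + X) ^ (i + 1) * (4 * X) ^ LL asc (i + 1)) ∧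
    (asc i → OO asc (i + 1) = X * EE asc (i + 1)) ∧
    (¬ asc i → OO asc (i + 1) = EE asc (i + 1)) := by
  refine ⟨?_, fun h => (EE_asc asc i h).2, fun h => (EE_desc asc i h).2⟩
  induction i with
  | zero =>
    obtain ⟨h1, h2⟩ := EE_asc asc 0 h0
    have e0 : EE asc 0 = 1 := by
      ext m
      simp [EE, cc, coeff_one]
    have o0 : OO asc 0 = 0 := by
      ext m
      simp [OO, cc]
      omega
    rw [e0, o0] at h1
    simp [LL] at *
    rw [h2]
    linear_combination (1 + X) * h1
  | succ i ih =>
    rw [LL_succ]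
    by_cases h : asc (i + 1)
    · obtain ⟨h1, h2⟩ := EE_asc asc (i + 1) h
      simp only [h, not_true, and_false, if_false, add_zero]
      rw [h2]
      linear_combination (1 + X) * ih + (1 - X) ^ (i + 1) * (1 + X) ^ (2 * LL asc (i + 1)) * (1 + X) * h1
    · obtain ⟨h1, h2⟩ := EE_desc asc (i + 1) h
      by_cases h' : asc i
      · have h3 := (EE_asc asc i h').2
        simp only [h, h', not_false_eq_true, and_true, if_true]
        rw [h2]
        rw [h3] at ih h1
        linear_combination (4 * X * (1 + X)) * ih + (1 - X) ^ (i + 1) * (1 + X) ^ (2 * LL asc (i + 1) + 2) * 2 * h1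
      · have h3 := (EE_desc asc i h').2
        simp only [h, h', not_false_eq_true, and_true, if_false, add_zero]
        rw [h2]
        rw [h3] at ih h1
        linear_combination (1 + X) * ih + (1 - X) ^ (i + 1) * (1 + X) ^ (2 * LL asc (i + 1)) * 2 * h1

open PowerSeries in
theorem mk_sum_cc (asc : ℕ → Prop) (i : ℕ) :
    (1 - X) * PowerSeries.mk (fun k => ∑ j ∈ Finset.range (2 * k + 1), cc asc i j)
      = EE asc i + OO asc i := by
  ext m
  rw [sub_mul, one_mul]
  rcases m with _ | m
  · simp [EE, OO]
  · simp only [EE, OO, map_sub, map_add, coeff_succ_X_mul, coeff_mk,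
        show 2 * (m + 1) = 2 * m + 1 + 1 by ring, Finset.sum_range_succ]
    simp
    ring

def stepR (asc : ℕ → Prop) (i a b : ℕ) : Prop := a < b ∨ (a = b ∧ (Even b ↔ asc i))

theorem chain_count (asc : ℕ → Prop) (h0 : asc 0) (N : ℕ) (m : ℕ) (j : Fin N) :
    ((Finset.univ.filter fun f : Fin (m + 1) → Fin N =>
      (∀ i : Fin m, stepR asc (i + 1) (f i.castSucc) (f i.succ)) ∧ f (Fin.last m) = j).card : ℚ)
      = cc asc (m + 1) j := by
  induction m generalizing j with
  | zero =>
    have : (Finset.univ.filter fun f : Fin (0 + 1) → Fin N =>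
      (∀ i : Fin 0, stepR asc (i + 1) (f i.castSucc) (f i.succ)) ∧ f (Fin.last 0) = j)
        = {fun _ => j} := by
      ext f
      simp only [Finset.mem_filter, Finset.mem_univ, true_and, Finset.mem_singleton, IsEmpty.forall_iff]
      constructor
      · intro h
        funext x
        rw [← h]
        congr 1
        omega
      · rintro rfl
        rfl
    rw [this]
    simp only [Finset.card_singleton, cc, h0, iff_true]
    rcases j with ⟨j, hj⟩
    rcases j with _ | j <;> simp
  | succ m ih =>
    have key : (Finset.univ.filter fun f : Fin (m + 1 + 1) → Fin N =>
        (∀ i : Fin (m + 1), stepR asc (i + 1) (f i.castSucc) (f i.succ)) ∧ f (Fin.last (m + 1)) = j).card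
        = ∑ l : Fin N, (if stepR asc (m + 1) l j then
          (Finset.univ.filter fun f : Fin (m + 1) → Fin N =>
      (∀ i : Fin m, stepR asc (i + 1) (f i.castSucc) (f i.succ)) ∧ f (Fin.last m) = l).card else 0) := by
      rw [Finset.card_eq_sum_card_fiberwise (t := Finset.univ) (f := fun f => f (Fin.last m).castSucc)
        (fun _ _ => Finset.mem_univ _)]
      refine Finset.sum_congr rfl fun l _ => ?_
      split_ifs with hl
      · refine Finset.card_bij' (fun f _ => Fin.init f) (fun f _ => Fin.snoc f j) ?_ ?_ ?_ ?_
        · intro f hf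
          simp only [Finset.mem_filter, Finset.mem_univ, true_and] at hf ⊢
          refine ⟨fun i => ?_, hf.2⟩
          have := hf.1.1 i.castSucc
          exact this
        · intro f hf
          simp only [Finset.mem_filter, Finset.mem_univ, true_and] at hf ⊢
          refine ⟨⟨fun i => ?_, by simp⟩, by simpa using hf.2⟩
          refine Fin.lastCases ?_ (fun i => ?_) i
          · simp only [Fin.snoc_castSucc, hf.2, Fin.succ_last, Fin.snoc_last]
            exact hl
          · rw [Fin.succ_castSucc]
            simp only [Fin.snoc_castSucc]
            exact hf.1 i
        · intro f hf
          simp only [Finset.mem_filter, Finset.mem_univ, true_and] at hf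
          rw [← hf.1.2]
          exact Fin.snoc_init_self f
        · intro f hf
          simp
      · rw [Finset.card_eq_zero, Finset.eq_empty_iff_forall_notMem]
        intro f hf
        simp only [Finset.mem_filter, Finset.mem_univ, true_and] at hf
        apply hl
        have := hf.1.1 (Fin.last m)
        rw [hf.2, Fin.succ_last, hf.1.2] at this
        exact this
    rw [key, cc]
    push_cast
    simp only [ih]
    rw [Fin.sum_univ_eq_sum_range (fun l => if stepR asc (m + 1) l j then cc asc (m + 1) l else 0) N,
      ← Finset.sum_filter]
    have : (Finset.range N).filter (fun l => stepR asc (m + 1) l j)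
        = if (Even (j : ℕ) ↔ asc (m + 1)) then insert (j : ℕ) (Finset.range j) else Finset.range j := by
      have := j.2
      ext l
      split_ifs with h <;> simp [stepR, h] <;> omega
    rw [this]
    split_ifs with h
    · rw [Finset.sum_insert (by simp)]
      ring
    · simp

theorem eps_cases (a : ℕ) : (Even a ∧ eps a = 1) ∨ (¬ Even a ∧ eps a = -1) := by
  unfold eps
  rcases Nat.even_or_odd a with h | h
  · left; exact ⟨h, h.neg_one_pow⟩
  · right; exact ⟨by simpa using h, h.neg_one_pow⟩

theorem compat_iff (m N : ℕ) (π : Equiv.Perm (Fin (m + 1))) (f : Fin (m + 1) → Fin N) :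
    Compat π f ↔ ∀ i : Fin m, stepR (fun l => oneLine (m + 1) π l < oneLine (m + 1) π (l + 1))
      (i + 1) (f i.castSucc) (f i.succ) := by
  have h1 : Compat π f ↔ StrictMono (fun x => toLex (f x, eps (f x) * ((π x : ℕ) : ℤ))) := by
    unfold Compat StrictMono
    refine forall_congr' fun x => forall_congr' fun y => ?_
    rw [Prod.Lex.toLex_lt_toLex]
    refine imp_congr_right fun _ => or_congr_right ?_
    refine and_congr_right fun h => ?_
    rw [h]
  rw [h1, Fin.strictMono_iff_lt_succ]
  refine forall_congr' fun i => ?_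
  rw [Prod.Lex.toLex_lt_toLex]
  unfold stepR
  simp only [Fin.lt_def, Fin.ext_iff]
  refine or_congr_right (and_congr_right fun h => ?_)
  have e1 : oneLine (m + 1) π (i + 1) = π i.castSucc + 1 := by
    unfold oneLine
    rw [dif_pos (by omega)]
    rfl
  have e2 : oneLine (m + 1) π (i + 1 + 1) = π i.succ + 1 := by
    unfold oneLine
    rw [dif_pos (by omega)]
    rfl
  rw [e1, e2, h]
  have hne : (π i.castSucc : ℕ) ≠ π i.succ := by
    intro hh
    have := π.injective (Fin.ext hh)
    simp [Fin.ext_iff] at this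
  rcases eps_cases (f i.succ : ℕ) with ⟨a, b⟩ | ⟨a, b⟩ <;> simp only [a, b, true_iff, false_iff] <;> omega

theorem lpk_eq_LL (m : ℕ) (π : Equiv.Perm (Fin (m + 1))) :
    lpk (m + 1) π = LL (fun l => oneLine (m + 1) π l < oneLine (m + 1) π (l + 1)) (m + 1) := by
  unfold lpk LL
  congr 1
  ext i
  simp only [Finset.mem_filter, Finset.mem_Icc]
  refine and_congr_right fun hi => ?_
  rw [show i - 1 + 1 = i by omega]
  refine and_congr_right fun _ => ?_
  rw [not_lt]
  have : oneLine (m + 1) π (i + 1) ≠ oneLine (m + 1) π i := by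
    unfold oneLine
    rw [dif_pos (by omega), dif_pos (by omega)]
    intro hh
    have := π.injective (Fin.ext (Nat.succ_injective hh))
    simp [Fin.ext_iff] at this
    omega
  omega

theorem Om_eq (m k : ℕ) (π : Equiv.Perm (Fin (m + 1))) :
    (Om (m + 1) k π : ℚ) = ∑ j ∈ Finset.range (2 * k + 1),
      cc (fun l => oneLine (m + 1) π l < oneLine (m + 1) π (l + 1)) (m + 1) j := by
  have h0 : oneLine (m + 1) π 0 < oneLine (m + 1) π (0 + 1) := by
    simp [oneLine]
  unfold Om
  rw [Finset.card_eq_sum_card_fiberwise (t := Finset.univ) (f := fun f => f (Fin.last m))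
        (fun _ _ => Finset.mem_univ _)]
  push_cast
  rw [← Fin.sum_univ_eq_sum_range]
  refine Finset.sum_congr rfl fun j _ => ?_
  rw [← chain_count _ h0]
  congr 2
  rw [Finset.filter_filter]
  refine Finset.filter_congr fun f _ => ?_
  rw [compat_iff]

open PowerSeries in
theorem Om_gf (m : ℕ) (π : Equiv.Perm (Fin (m + 1))) :
    (1 - X) ^ (m + 2) * (1 + X) ^ (2 * lpk (m + 1) π) * PowerSeries.mk (fun k => (Om (m + 1) k π : ℚ))
      = (1 + X) ^ (m + 1) * (4 * X) ^ lpk (m + 1) π := by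
  have h0 : oneLine (m + 1) π 0 < oneLine (m + 1) π (0 + 1) := by
    simp [oneLine]
  simp only [Om_eq, lpk_eq_LL]
  have h1 := mk_sum_cc (fun l => oneLine (m + 1) π l < oneLine (m + 1) π (l + 1)) (m + 1)
  have h2 := (SS_formula (fun l => oneLine (m + 1) π l < oneLine (m + 1) π (l + 1)) h0 m).1
  rw [← h2, ← h1]
  ring

theorem existsUnique_sort {n : ℕ} {β : Type*} [LinearOrder β] (key : Fin n → β)
    (hk : Function.Injective key) : ∃! σ : Equiv.Perm (Fin n), StrictMono (key ∘ σ) := by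
  refine ⟨Tuple.sort key, ?_, ?_⟩
  · exact (Tuple.monotone_sort key).strictMono_of_injective (hk.comp (Equiv.injective _))
  · intro τ hτ
    have := Tuple.unique_monotone hτ.monotone (Tuple.monotone_sort key)
    ext x
    have h := congrFun this x
    rw [hk h]

theorem sum_Om (n k : ℕ) : ∑ π : Equiv.Perm (Fin n), Om n k π = (2 * k + 1) ^ n := by
  have h1 : ∀ π : Equiv.Perm (Fin n), Om n k π
      = ∑ g : Fin n → Fin (2 * k + 1), if Compat π (g ∘ π) then 1 else 0 := by
    intro π
    unfold Om
    rw [Finset.card_filter]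
    exact (Equiv.sum_comp (Equiv.arrowCongr π.symm (Equiv.refl (Fin (2 * k + 1))))
      (fun f => if Compat π f then 1 else 0)).symm
  simp only [h1]
  rw [Finset.sum_comm]
  have h2 : ∀ g : Fin n → Fin (2 * k + 1),
      (∑ π : Equiv.Perm (Fin n), if Compat π (g ∘ π) then 1 else 0) = 1 := by
    intro g
    rw [← Finset.card_filter, Finset.card_eq_one]
    obtain ⟨σ, hσ, hu⟩ := existsUnique_sort (fun x => toLex (g x, eps (g x) * ((x : ℕ) : ℤ))) (by
      intro x y h
      have h' := congrArg ofLex h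
      simp only [ofLex_toLex, Prod.mk.injEq] at h'
      obtain ⟨h1, h2⟩ := h'
      rw [h1] at h2
      rcases eps_cases (g y : ℕ) with ⟨a, b⟩ | ⟨a, b⟩ <;> rw [b] at h2 <;> omega)
    have h3 : ∀ π : Equiv.Perm (Fin n), Compat π (g ∘ π) ↔
        StrictMono ((fun x => toLex (g x, eps (g x) * ((x : ℕ) : ℤ))) ∘ π) := by
      intro π
      unfold Compat StrictMono
      refine forall_congr' fun x => forall_congr' fun y => ?_
      simp only [Function.comp]
      rw [Prod.Lex.toLex_lt_toLex]
      refine imp_congr_right fun _ => or_congr_right ?_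
      refine and_congr_right fun h => ?_
      rw [h]
    refine ⟨σ, ?_⟩
    ext π
    simp only [Finset.mem_filter, Finset.mem_univ, true_and, Finset.mem_singleton]
    rw [h3]
    constructor
    · intro h; exact hu π h
    · rintro rfl; exact hσ
  simp [h2]

theorem sum_conj {G : Type*} [Group G] [Fintype G] (g : G) (F : G → ℕ) :
    ∑ ρ : G, F (ρ * g * ρ⁻¹) = Nat.card (Subgroup.centralizer {g}) *
      ∑ π ∈ Finset.univ.filter (fun π => IsConj g π), F π := by
  rw [← Finset.sum_fiberwise_of_maps_to (s := Finset.univ)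
    (t := Finset.univ.filter (fun π => IsConj g π)) (g := fun ρ => ρ * g * ρ⁻¹)
    (fun ρ _ => by
      simp only [Finset.mem_filter, Finset.mem_univ, true_and]
      exact isConj_iff.2 ⟨ρ, rfl⟩), Finset.mul_sum]
  refine Finset.sum_congr rfl fun π hπ => ?_
  simp only [Finset.mem_filter, Finset.mem_univ, true_and] at hπ
  obtain ⟨c, hc⟩ := isConj_iff.1 hπ
  rw [Finset.sum_congr rfl (g := fun _ => F π) (fun ρ hρ => by
    simp only [Finset.mem_filter, Finset.mem_univ, true_and] at hρ
    rw [hρ])]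
  rw [Finset.sum_const, smul_eq_mul]
  congr 1
  rw [Nat.card_eq_fintype_card, ← Finset.card_univ]
  symm
  refine Finset.card_bij (fun z _ => c * z.1) ?_ ?_ ?_
  · intro z _
    simp only [Finset.mem_filter, Finset.mem_univ, true_and]
    have := Subgroup.mem_centralizer_singleton_iff.1 z.2
    rw [← hc, mul_assoc c, this]
    group
  · intro z _ z' _ h
    exact Subtype.ext (mul_left_cancel h)
  · intro ρ hρ
    simp only [Finset.mem_filter, Finset.mem_univ, true_and] at hρ
    refine ⟨⟨c⁻¹ * ρ, ?_⟩, Finset.mem_univ _, by simp⟩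
    rw [Subgroup.mem_centralizer_singleton_iff]
    rw [← hc] at hρ
    have h2 : ρ * g = c * g * c⁻¹ * ρ := by rw [← hρ]; group
    rw [mul_assoc, h2]; group

theorem cyclicSet_eq (m : ℕ) : cyclicSet (m + 2)
    = Finset.univ.filter (fun π => IsConj (finRotate (m + 2)) π) := by
  unfold cyclicSet
  ext π
  simp only [Finset.mem_filter, Finset.mem_univ, true_and]
  rw [Equiv.Perm.isConj_iff_cycleType_eq, cycleType_finRotate]
  unfold IsCyclicPerm fullCycleType
  have hs := Equiv.Perm.sum_cycleType π
  constructor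
  · intro h
    have : (m + 2 - π.support.card) = 0 := by
      by_contra h0
      have h1 : 1 ∈ ({m + 2} : Multiset ℕ) := by
        rw [← h, Multiset.mem_add]
        right
        exact Multiset.mem_replicate.2 ⟨h0, rfl⟩
      simp at h1
    rw [this] at h
    simpa using h.symm
  · intro h
    rw [← h] at hs ⊢
    simp at hs
    simp [← hs]

theorem card_cent (m : ℕ) : Nat.card (Subgroup.centralizer {finRotate (m + 2)}) = m + 2 := by
  rw [Equiv.Perm.nat_card_centralizer, cycleType_finRotate]
  simp

def Cons {n N : ℕ} (W : Fin n → Fin N) (ρ : Equiv.Perm (Fin n)) : Prop :=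
  ∀ i j : Fin n, ρ i < ρ j → W i < W j ∨ (W i = W j ∧
    eps (W i) * ((ρ (finRotate n i) : ℕ) : ℤ) < eps (W i) * ((ρ (finRotate n j) : ℕ) : ℤ))

theorem sum_cyc_Om (m k : ℕ) : (m + 2) * ∑ π ∈ cyclicSet (m + 2), Om (m + 2) k π
    = ∑ W : Fin (m + 2) → Fin (2 * k + 1),
      (Finset.univ.filter fun ρ : Equiv.Perm (Fin (m + 2)) => Cons W ρ).card := by
  have h := sum_conj (finRotate (m + 2)) (fun π => Om (m + 2) k π)
  rw [card_cent] at h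
  have h' : ∑ ρ : Equiv.Perm (Fin (m + 2)), Om (m + 2) k (ρ * finRotate (m + 2) * ρ⁻¹)
      = (m + 2) * ∑ π ∈ cyclicSet (m + 2), Om (m + 2) k π := by
    rw [h, cyclicSet_eq]
    congr!
  rw [← h']
  simp only [Finset.card_filter]
  rw [Finset.sum_comm]
  refine Finset.sum_congr rfl fun ρ _ => ?_
  unfold Om
  rw [Finset.card_filter]
  rw [← Equiv.sum_comp (Equiv.arrowCongr ρ (Equiv.refl (Fin (2 * k + 1))))]
  refine Finset.sum_congr rfl fun W _ => ?_
  congr 1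
  apply propext
  unfold Compat Cons
  rw [← ρ.forall_congr_right]
  refine forall_congr' fun i => ?_
  rw [← ρ.forall_congr_right]
  simp [Equiv.arrowCongr]

def sg (w : ℕ → ℕ) (i l : ℕ) : ℤ := ∏ a ∈ Finset.range l, eps (w (i + a))

theorem eps_cases' (a : ℕ) : eps a = 1 ∨ eps a = -1 := by
  rcases eps_cases a with h | h
  · exact Or.inl h.2
  · exact Or.inr h.2

theorem sg_succ (w : ℕ → ℕ) (i l : ℕ) : sg w i (l + 1) = sg w i l * eps (w (i + l)) :=
  Finset.prod_range_succ _ _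

theorem sg_zero (w : ℕ → ℕ) (i : ℕ) : sg w i 0 = 1 := rfl

theorem sg_add (w : ℕ → ℕ) (i a b : ℕ) : sg w i (a + b) = sg w i a * sg w (i + a) b := by
  unfold sg
  rw [Finset.prod_range_add]
  simp only [add_assoc]

theorem sg_one (w : ℕ → ℕ) (i : ℕ) : sg w i 1 = eps (w i) := by simp [sg]

theorem sg_succ' (w : ℕ → ℕ) (i l : ℕ) : sg w i (l + 1) = eps (w i) * sg w (i + 1) l := by
  rw [add_comm, sg_add, sg_one]

theorem sg_cases (w : ℕ → ℕ) (i l : ℕ) : sg w i l = 1 ∨ sg w i l = -1 := by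
  induction l with
  | zero => exact Or.inl rfl
  | succ l ih =>
    rw [sg_succ]
    rcases ih with h | h <;> rcases eps_cases' (w (i + l)) with h' | h' <;> simp [h, h']

theorem sg_congr (w : ℕ → ℕ) (i j l : ℕ) (h : ∀ a < l, w (i + a) = w (j + a)) :
    sg w i l = sg w j l :=
  Finset.prod_congr rfl fun a ha => by rw [h a (Finset.mem_range.1 ha)]

theorem sg_mul (w : ℕ → ℕ) (q : ℕ) (hq : ∀ i, w (i + q) = w i) (t : ℕ) :
    sg w 0 (t * q) = sg w 0 q ^ t := by
  induction t with
  | zero => simp [sg]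
  | succ t ih =>
    rw [Nat.succ_mul, add_comm, sg_add, pow_succ', ← ih]
    congr 1
    exact sg_congr _ _ _ _ fun a _ => by rw [zero_add, zero_add, add_comm, hq]

def HC (w : ℕ → ℕ) (R : ℕ → ℤ) : Prop :=
  ∀ i j, R i < R j → w i < w j ∨ (w i = w j ∧ eps (w i) * R (i + 1) < eps (w i) * R (j + 1))

theorem transport {w : ℕ → ℕ} {R : ℕ → ℤ} (hC : HC w R) (i j l : ℕ)
    (h : ∀ a < l, w (i + a) = w (j + a)) (hR : R i < R j) :
    sg w i l * R (i + l) < sg w i l * R (j + l) := by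
  induction l with
  | zero => simpa [sg] using hR
  | succ l ih =>
    have ih := ih fun a ha => h a (by omega)
    have hl := h l (by omega)
    rw [sg_succ]
    rcases sg_cases w i l with h1 | h1
    · rw [h1] at ih ⊢
      have := hC (i + l) (j + l) (by linarith)
      rcases this with h2 | h2
      · omega
      · simpa [add_assoc] using h2.2
    · rw [h1] at ih ⊢
      have := hC (j + l) (i + l) (by linarith)
      rcases this with h2 | h2
      · omega
      · have h3 := h2.2
        rw [← hl] at h3
        simp only [add_assoc] at h3
        linarith

theorem lemmaZ {w : ℕ → ℕ} {R : ℕ → ℤ} (hC : HC w R) (n q : ℕ) (hn : 0 < n)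
    (hR : ∀ i, R (i + n) = R i) (hq : ∀ i, w (i + q) = w i) (hs : sg w 0 q = 1) : R q = R 0 := by
  have hs' : ∀ t, sg w 0 (t * q) = 1 := fun t => by rw [sg_mul w q hq, hs, one_pow]
  have hs2 : ∀ t, sg w q (t * q) = 1 := fun t => by
    rw [← hs' t]
    exact sg_congr _ _ _ _ fun a _ => by rw [zero_add, add_comm, hq]
  have hRn : ∀ t, R (t * n) = R 0 := by
    intro t
    induction t with
    | zero => simp
    | succ t ih => rw [Nat.succ_mul, hR, ih]
  rcases lt_trichotomy (R 0) (R q) with h | h | h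
  · exfalso
    have : StrictMono fun t => R (t * q) := by
      refine strictMono_nat_of_lt_succ fun t => ?_
      have := transport hC 0 q (t * q) (fun a _ => by rw [zero_add, add_comm q, hq]) h
      rw [hs'] at this
      simpa [Nat.succ_mul, add_comm] using this
    have h2 := this hn
    simp only [zero_mul] at h2
    rw [mul_comm, hRn] at h2
    exact lt_irrefl _ h2
  · exact h.symm
  · exfalso
    have : StrictAnti fun t => R (t * q) := by
      refine strictAnti_nat_of_succ_lt fun t => ?_
      have := transport hC q 0 (t * q) (fun a _ => by rw [zero_add, add_comm q, hq]) h
      rw [hs2] at this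
      simpa [Nat.succ_mul, add_comm] using this
    have h2 := this hn
    simp only [zero_mul] at h2
    rw [mul_comm, hRn] at h2
    exact lt_irrefl _ h2

def vv (w : ℕ → ℕ) (i : ℕ) : ℕ → ℤ := fun l => sg w i l * (w (i + l) : ℤ)

theorem vv_zero (w : ℕ → ℕ) (i : ℕ) : vv w i 0 = w i := by simp [vv, sg]

theorem vv_succ (w : ℕ → ℕ) (i l : ℕ) : vv w i (l + 1) = eps (w i) * vv w (i + 1) l := by
  unfold vv
  rw [sg_succ', mul_assoc, show i + (l + 1) = i + 1 + l by ring]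

theorem vv_lt (w : ℕ → ℕ) (i j : ℕ) (h : toLex (vv w i) < toLex (vv w j)) :
    w i < w j ∨ (w i = w j ∧ ((eps (w i) = 1 ∧ toLex (vv w (i + 1)) < toLex (vv w (j + 1))) ∨
      (eps (w i) = -1 ∧ toLex (vv w (j + 1)) < toLex (vv w (i + 1))))) := by
  obtain ⟨k, hk, hk'⟩ := h
  simp only [] at hk hk'
  rcases k with _ | k
  · left
    change vv w i 0 < vv w j 0 at hk'
    rw [vv_zero, vv_zero] at hk'
    exact_mod_cast hk'
  · right
    have h0 : w i = w j := by
      have : vv w i 0 = vv w j 0 := hk 0 (Nat.succ_pos k)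
      rw [vv_zero, vv_zero] at this
      exact_mod_cast this
    refine ⟨h0, ?_⟩
    have hk2 : ∀ a < k, eps (w i) * vv w (i + 1) a = eps (w i) * vv w (j + 1) a := by
      intro a ha
      have : vv w i (a + 1) = vv w j (a + 1) := hk (a + 1) (by omega)
      rwa [vv_succ, vv_succ, ← h0] at this
    have hk3 : eps (w i) * vv w (i + 1) k < eps (w i) * vv w (j + 1) k := by
      have : vv w i (k + 1) < vv w j (k + 1) := hk'
      rwa [vv_succ, vv_succ, ← h0] at this
    rcases eps_cases' (w i) with h1 | h1
    · left
      refine ⟨h1, k, fun a ha => ?_, ?_⟩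
      · have := hk2 a ha
        rw [h1] at this
        change vv w (i + 1) a = vv w (j + 1) a
        linarith
      · rw [h1] at hk3
        change vv w (i + 1) k < vv w (j + 1) k
        linarith
    · right
      refine ⟨h1, k, fun a ha => ?_, ?_⟩
      · have := hk2 a ha
        rw [h1] at this
        change vv w (j + 1) a = vv w (i + 1) a
        linarith
      · rw [h1] at hk3
        change vv w (j + 1) k < vv w (i + 1) k
        linarith

theorem vv_eq_succ (w : ℕ → ℕ) (i j : ℕ) (h : vv w i = vv w j) :
    w i = w j ∧ vv w (i + 1) = vv w (j + 1) := by
  have h0 : w i = w j := by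
    have : vv w i 0 = vv w j 0 := by rw [h]
    rw [vv_zero, vv_zero] at this
    exact_mod_cast this
  refine ⟨h0, ?_⟩
  funext a
  have : vv w i (a + 1) = vv w j (a + 1) := by rw [h]
  rw [vv_succ, vv_succ, ← h0] at this
  rcases eps_cases' (w i) with h1 | h1 <;> rw [h1] at this <;> linarith

theorem vv_eq_iff (w : ℕ → ℕ) (i j : ℕ) : vv w i = vv w j ↔ ∀ l, w (i + l) = w (j + l) := by
  constructor
  · intro h l
    have : vv w (i + l) = vv w (j + l) := by
      induction l with
      | zero => exact h
      | succ l ih => exact (vv_eq_succ w _ _ ih).2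
    exact (vv_eq_succ w _ _ this).1
  · intro h
    funext l
    unfold vv
    rw [h l, sg_congr w i j l fun a _ => h a]

theorem vv_lt_of_R {w : ℕ → ℕ} {R : ℕ → ℤ} (hC : HC w R) (i j : ℕ) (hR : R i < R j)
    (hne : vv w i ≠ vv w j) : toLex (vv w i) < toLex (vv w j) := by
  rw [Ne, vv_eq_iff, not_forall] at hne
  have hk := Nat.find_spec hne
  have hmin : ∀ a < Nat.find hne, w (i + a) = w (j + a) := fun a ha => not_not.1 (Nat.find_min hne ha)
  set k := Nat.find hne
  have ht := transport hC i j k hmin hR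
  have hsg := sg_congr w i j k hmin
  refine ⟨k, fun a ha => ?_, ?_⟩
  · change vv w i a = vv w j a
    unfold vv
    rw [hmin a ha, sg_congr w i j a fun b hb => hmin b (hb.trans ha)]
  · change vv w i k < vv w j k
    unfold vv
    rw [← hsg]
    rcases sg_cases w i k with h1 | h1
    · rw [h1] at ht ⊢
      have := hC _ _ (by linarith : R (i + k) < R (j + k))
      omega
    · rw [h1] at ht ⊢
      have := hC _ _ (by linarith : R (j + k) < R (i + k))
      omega

def KK (w : ℕ → ℕ) (c : ℤ) (i : ℕ) : Lex (ℕ → ℤ) ×ₗ ℤ := toLex (toLex (vv w i), c * sg w 0 i)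

theorem KK_lt_iff (w : ℕ → ℕ) (c : ℤ) (i j : ℕ) : KK w c i < KK w c j ↔
    toLex (vv w i) < toLex (vv w j) ∨ (vv w i = vv w j ∧ c * sg w 0 i < c * sg w 0 j) := by
  unfold KK
  rw [Prod.Lex.toLex_lt_toLex]
  simp

theorem KK_step (w : ℕ → ℕ) (c : ℤ) (i j : ℕ) (h : KK w c i < KK w c j) :
    w i < w j ∨ (w i = w j ∧ ((eps (w i) = 1 ∧ KK w c (i + 1) < KK w c (j + 1)) ∨
      (eps (w i) = -1 ∧ KK w c (j + 1) < KK w c (i + 1)))) := by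
  simp only [KK_lt_iff] at h ⊢
  rcases h with h | ⟨h1, h2⟩
  · rcases vv_lt w i j h with h | ⟨h, h' | h'⟩
    · exact Or.inl h
    · exact Or.inr ⟨h, Or.inl ⟨h'.1, Or.inl h'.2⟩⟩
    · exact Or.inr ⟨h, Or.inr ⟨h'.1, Or.inl h'.2⟩⟩
  · obtain ⟨h3, h4⟩ := vv_eq_succ w i j h1
    refine Or.inr ⟨h3, ?_⟩
    rw [sg_succ, sg_succ, zero_add, zero_add, ← h3]
    rcases eps_cases' (w i) with h5 | h5
    · left
      refine ⟨h5, Or.inr ⟨h4, ?_⟩⟩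
      rw [h5]; linarith
    · right
      refine ⟨h5, Or.inr ⟨h4.symm, ?_⟩⟩
      rw [h5]; linarith

theorem KK_periodic (w : ℕ → ℕ) (c : ℤ) (n : ℕ) (hn : ∀ i, w (i + n) = w i)
    (hc : c * sg w 0 n = c) (i : ℕ) : KK w c (i + n) = KK w c i := by
  unfold KK
  have h1 : vv w (i + n) = vv w i := by
    rw [vv_eq_iff]
    intro l
    rw [← hn (i + l)]
    congr 1
    ring
  have h2 : sg w (0 + n) i = sg w 0 i :=
    sg_congr _ _ _ _ fun a _ => by rw [zero_add, zero_add, add_comm, hn]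
  rw [h1, add_comm i n, sg_add, ← mul_assoc, hc, h2]

theorem HC_of_KK (w : ℕ → ℕ) (c : ℤ) (R : ℕ → ℤ) (h : ∀ i j, R i < R j ↔ KK w c i < KK w c j) :
    HC w R := by
  intro i j hij
  rcases KK_step w c i j ((h i j).1 hij) with h1 | ⟨h1, ⟨h2, h3⟩ | ⟨h2, h3⟩⟩
  · exact Or.inl h1
  · right
    refine ⟨h1, ?_⟩
    rw [h2]
    have := (h _ _).2 h3
    linarith
  · right
    refine ⟨h1, ?_⟩
    rw [h2]
    have := (h _ _).2 h3
    linarith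

def shiftW (w : ℕ → ℕ) : ℕ → ℕ := fun i => w (i + 1)

theorem shiftW_iter (w : ℕ → ℕ) (q : ℕ) : shiftW^[q] w = fun i => w (i + q) := by
  induction q with
  | zero => rfl
  | succ q ih =>
    rw [Function.iterate_succ_apply', ih]
    funext i
    simp only [shiftW]
    congr 1
    ring

theorem isPer_iff (w : ℕ → ℕ) (q : ℕ) :
    Function.IsPeriodicPt shiftW q w ↔ ∀ i, w (i + q) = w i := by
  unfold Function.IsPeriodicPt Function.IsFixedPt
  rw [shiftW_iter, funext_iff]

def mp (w : ℕ → ℕ) : ℕ := Function.minimalPeriod shiftW w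

theorem mp_dvd_iff (w : ℕ → ℕ) (q : ℕ) : mp w ∣ q ↔ ∀ i, w (i + q) = w i := by
  rw [← isPer_iff, Function.isPeriodicPt_iff_minimalPeriod_dvd]
  rfl

theorem vv_eq_iff_mod (w : ℕ → ℕ) (hp : 0 < mp w) (i j : ℕ) :
    vv w i = vv w j ↔ i % mp w = j % mp w := by
  rw [vv_eq_iff]
  have h1 : (∀ l, w (i + l) = w (j + l)) ↔ shiftW^[i] w = shiftW^[j] w := by
    rw [shiftW_iter, shiftW_iter, funext_iff]
    simp only [add_comm]
  rw [h1, ← Function.iterate_mod_minimalPeriod_eq (n := i),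
    ← Function.iterate_mod_minimalPeriod_eq (n := j)]
  exact Function.iterate_eq_iterate_iff_of_lt_minimalPeriod (Nat.mod_lt _ hp) (Nat.mod_lt _ hp)

def extW {m N : ℕ} (W : Fin (m + 2) → Fin N) : ℕ → ℕ := fun i => W (Fin.ofNat (m + 2) i)
def extR {m : ℕ} (ρ : Equiv.Perm (Fin (m + 2))) : ℕ → ℤ := fun i => ((ρ (Fin.ofNat (m + 2) i) : ℕ) : ℤ)

theorem ofNat_add_n (m i : ℕ) : Fin.ofNat (m + 2) (i + (m + 2)) = Fin.ofNat (m + 2) i := by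
  ext; simp

theorem ofNat_rot (m i : ℕ) : finRotate (m + 2) (Fin.ofNat (m + 2) i) = Fin.ofNat (m + 2) (i + 1) := by
  rw [finRotate_apply]
  ext
  simp [Fin.val_add]

theorem cons_iff {m N : ℕ} (W : Fin (m + 2) → Fin N) (ρ : Equiv.Perm (Fin (m + 2))) :
    Cons W ρ ↔ HC (extW W) (extR ρ) := by
  unfold Cons HC extW extR
  simp only [← ofNat_rot]
  constructor
  · intro h i j hij
    have := h (Fin.ofNat (m + 2) i) (Fin.ofNat (m + 2) j) (by exact_mod_cast hij)
    simpa only [Fin.lt_def, Fin.ext_iff] using this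
  · intro h i j hij
    have := h i j (by simpa using hij)
    simpa only [Fin.ofNat_val_eq_self, ← Fin.lt_def, ← Fin.ext_iff] using this

theorem extW_per {m N : ℕ} (W : Fin (m + 2) → Fin N) (i : ℕ) : extW W (i + (m + 2)) = extW W i := by
  unfold extW; rw [ofNat_add_n]

theorem extR_per {m : ℕ} (ρ : Equiv.Perm (Fin (m + 2))) (i : ℕ) :
    extR ρ (i + (m + 2)) = extR ρ i := by
  unfold extR; rw [ofNat_add_n]

theorem extR_eq {m : ℕ} (ρ : Equiv.Perm (Fin (m + 2))) (i j : ℕ) (h : extR ρ i = extR ρ j) :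
    i % (m + 2) = j % (m + 2) := by
  unfold extR at h
  have := ρ.injective (Fin.ext (Int.ofNat_inj.1 h))
  simpa [Fin.ext_iff] using this

theorem cons_of_strictMono {m N : ℕ} (W : Fin (m + 2) → Fin N) (ρ : Equiv.Perm (Fin (m + 2))) (c : ℤ)
    (hc : c * sg (extW W) 0 (m + 2) = c)
    (h : StrictMono ((fun x : Fin (m + 2) => KK (extW W) c x) ∘ ρ.symm)) : Cons W ρ := by
  rw [cons_iff]
  have hK : ∀ i, KK (extW W) c i = KK (extW W) c (Fin.ofNat (m + 2) i : Fin (m + 2)) := by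
    intro i
    have hp : Function.Periodic (KK (extW W) c) (m + 2) := KK_periodic _ c _ (extW_per W) hc
    simp only [Fin.val_ofNat]
    exact (hp.map_mod_nat i).symm
  apply HC_of_KK _ c
  intro i j
  rw [hK i, hK j]
  have := h.lt_iff_lt (a := ρ (Fin.ofNat (m + 2) i)) (b := ρ (Fin.ofNat (m + 2) j))
  simp only [Function.comp, Equiv.symm_apply_apply] at this
  rw [this]
  simp [extR]

theorem strictMono_of {m : ℕ} {β : Type*} [LinearOrder β] (K : ℕ → β) (ρ : Equiv.Perm (Fin (m + 2)))
    (h : ∀ i j, i < m + 2 → j < m + 2 → extR ρ i < extR ρ j → K i < K j) :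
    StrictMono ((fun x : Fin (m + 2) => K x) ∘ ρ.symm) := by
  intro x y hxy
  apply h _ _ (Fin.is_lt _) (Fin.is_lt _)
  simpa [extR] using hxy

theorem mp_pos {m N : ℕ} (W : Fin (m + 2) → Fin N) : 0 < mp (extW W) :=
  Nat.pos_of_dvd_of_pos ((mp_dvd_iff _ (m + 2)).2 (extW_per W)) (by omega)

theorem nu_one {m N : ℕ} (W : Fin (m + 2) → Fin N) (hp : mp (extW W) = m + 2) :
    (Finset.univ.filter fun ρ : Equiv.Perm (Fin (m + 2)) => Cons W ρ).card = 1 := by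
  have hinj : ∀ i j, i < m + 2 → j < m + 2 → vv (extW W) i = vv (extW W) j → i = j := by
    intro i j hi hj h
    rw [vv_eq_iff_mod _ (mp_pos W), hp, Nat.mod_eq_of_lt hi, Nat.mod_eq_of_lt hj] at h
    exact h
  obtain ⟨σ, hσ, hu⟩ := existsUnique_sort (fun x : Fin (m + 2) => KK (extW W) 0 x) (by
    intro x y h
    have h' := congrArg ofLex h
    simp only [KK, ofLex_toLex, Prod.mk.injEq] at h'
    exact Fin.ext (hinj _ _ x.2 y.2 (toLex.injective h'.1)))
  rw [Finset.card_eq_one]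
  refine ⟨σ.symm, ?_⟩
  ext ρ
  simp only [Finset.mem_filter, Finset.mem_univ, true_and, Finset.mem_singleton]
  constructor
  · intro h
    rw [cons_iff] at h
    have := hu ρ.symm (strictMono_of (KK (extW W) 0) ρ fun i j hi hj hij => by
      rw [KK_lt_iff]
      left
      refine vv_lt_of_R h i j hij fun hv => ?_
      rw [hinj i j hi hj hv] at hij
      exact lt_irrefl _ hij)
    rw [← this]; rfl
  · rintro rfl
    exact cons_of_strictMono W _ 0 (by simp) hσ

theorem nu_two {m N : ℕ} (W : Fin (m + 2) → Fin N) (hp : m + 2 = 2 * mp (extW W))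
    (hs : sg (extW W) 0 (mp (extW W)) = -1) :
    (Finset.univ.filter fun ρ : Equiv.Perm (Fin (m + 2)) => Cons W ρ).card = 2 := by
  have hp0 := mp_pos W
  have hper := (mp_dvd_iff (extW W) (mp (extW W))).1 dvd_rfl
  have hmod := vv_eq_iff_mod _ hp0
  set w := extW W with hw
  set p := mp w with hpdef
  have hsg : ∀ i, sg w 0 (i + p) = - sg w 0 i := by
    intro i
    rw [add_comm, sg_add, hs, sg_congr w (0 + p) 0 i fun a _ => by
      rw [zero_add, zero_add, add_comm, hper]]
    ring
  have hsn : sg w 0 (m + 2) = 1 := by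
    rw [hp, sg_mul w p hper, hs]; norm_num
  have hcase : ∀ i j, i < m + 2 → j < m + 2 → vv w i = vv w j → i = j ∨ j = i + p ∨ i = j + p := by
    intro i j hi hj h
    rw [hmod] at h
    have h1 := Nat.mod_add_div i p
    have h2 := Nat.mod_add_div j p
    have h3 : i / p < 2 := by rw [Nat.div_lt_iff_lt_mul hp0]; omega
    have h4 : j / p < 2 := by rw [Nat.div_lt_iff_lt_mul hp0]; omega
    interval_cases i / p <;> interval_cases j / p <;> omega
  have hinj : ∀ c : ℤ, c ≠ 0 → Function.Injective (fun x : Fin (m + 2) => KK w c x) := by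
    intro c hc x y h
    have h' := congrArg ofLex h
    simp only [KK, ofLex_toLex, Prod.mk.injEq] at h'
    obtain ⟨h1, h2⟩ := h'
    have h2 := mul_left_cancel₀ hc h2
    rcases hcase _ _ x.2 y.2 (toLex.injective h1) with h3 | h3 | h3
    · exact Fin.ext h3
    · rw [h3, hsg] at h2
      rcases sg_cases w 0 x with h4 | h4 <;> omega
    · rw [h3, hsg] at h2
      rcases sg_cases w 0 y with h4 | h4 <;> omega
  obtain ⟨σ, hσ, hu⟩ := existsUnique_sort _ (hinj 1 (by norm_num))
  obtain ⟨τ, hτ, hv⟩ := existsUnique_sort _ (hinj (-1) (by norm_num))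
  have hv0 : vv w 0 = vv w p := by rw [hmod]; simp
  have hs0 : sg w 0 p = -1 := hs
  rw [Finset.card_eq_two]
  refine ⟨σ.symm, τ.symm, ?_, ?_⟩
  · intro h
    have h : σ = τ := by rw [← σ.symm_symm, h, τ.symm_symm]
    subst h
    let x0 : Fin (m + 2) := ⟨0, by omega⟩
    let xp : Fin (m + 2) := ⟨p, by omega⟩
    have e1 : σ.symm xp < σ.symm x0 := by
      rw [← hσ.lt_iff_lt]
      simp only [Function.comp, Equiv.apply_symm_apply]
      rw [KK_lt_iff]
      right
      refine ⟨hv0.symm, ?_⟩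
      simp only [x0, xp, hs0, sg_zero]
      norm_num
    have e2 : σ.symm x0 < σ.symm xp := by
      rw [← hτ.lt_iff_lt]
      simp only [Function.comp, Equiv.apply_symm_apply]
      rw [KK_lt_iff]
      right
      refine ⟨hv0, ?_⟩
      simp only [x0, xp, hs0, sg_zero]
      norm_num
    exact lt_asymm e1 e2
  · ext ρ
    simp only [Finset.mem_filter, Finset.mem_univ, true_and, Finset.mem_insert, Finset.mem_singleton]
    constructor
    · intro h
      rw [cons_iff, ← hw] at h
      have hne : extR ρ 0 ≠ extR ρ p := by
        intro h0
        have := extR_eq ρ _ _ h0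
        rw [Nat.zero_mod, Nat.mod_eq_of_lt (by omega)] at this
        omega
      have hsgp : ∀ i, sg w p i = sg w 0 i := fun i => sg_congr w p 0 i fun a _ => by
        rw [zero_add, add_comm, hper]
      rcases lt_or_gt_of_ne hne with h0 | h0
      · right
        have := hv ρ.symm (strictMono_of (KK w (-1)) ρ fun i j hi hj hij => by
          rw [KK_lt_iff]
          by_cases hvv : vv w i = vv w j
          · right
            refine ⟨hvv, ?_⟩
            rcases hcase i j hi hj hvv with h3 | h3 | h3
            · rw [h3] at hij; exact absurd hij (lt_irrefl _)
            · have ht := transport h 0 p i (fun a _ => by rw [zero_add, add_comm p, hper]) h0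
              rw [h3, hsg]
              rw [zero_add, add_comm p, ← h3] at ht
              rcases sg_cases w 0 i with h4 | h4 <;> rw [h4] at ht ⊢ <;> omega
            · have ht := transport h 0 p j (fun a _ => by rw [zero_add, add_comm p, hper]) h0
              rw [h3, hsg]
              rw [zero_add, add_comm p, ← h3] at ht
              rcases sg_cases w 0 j with h4 | h4 <;> rw [h4] at ht ⊢ <;> omega
          · left
            exact vv_lt_of_R h i j hij hvv)
        rw [← this]; rfl
      · left
        have := hu ρ.symm (strictMono_of (KK w 1) ρ fun i j hi hj hij => by
          rw [KK_lt_iff]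
          by_cases hvv : vv w i = vv w j
          · right
            refine ⟨hvv, ?_⟩
            rcases hcase i j hi hj hvv with h3 | h3 | h3
            · rw [h3] at hij; exact absurd hij (lt_irrefl _)
            · have ht := transport h p 0 i (fun a _ => by rw [zero_add, add_comm p, hper]) h0
              rw [h3, hsg]
              rw [hsgp, zero_add, add_comm p, ← h3] at ht
              rcases sg_cases w 0 i with h4 | h4 <;> rw [h4] at ht ⊢ <;> omega
            · have ht := transport h p 0 j (fun a _ => by rw [zero_add, add_comm p, hper]) h0
              rw [h3, hsg]
              rw [hsgp, zero_add, add_comm p, ← h3] at ht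
              rcases sg_cases w 0 j with h4 | h4 <;> rw [h4] at ht ⊢ <;> omega
          · left
            exact vv_lt_of_R h i j hij hvv)
        rw [← this]; rfl
    · rintro (rfl | rfl)
      · exact cons_of_strictMono W _ 1 (by rw [hsn, mul_one]) hσ
      · exact cons_of_strictMono W _ (-1) (by rw [hsn, mul_one]) hτ

theorem nu_zero {m N : ℕ} (W : Fin (m + 2) → Fin N) (h1 : mp (extW W) ≠ m + 2)
    (h2 : ¬ (m + 2 = 2 * mp (extW W) ∧ sg (extW W) 0 (mp (extW W)) = -1)) :
    (Finset.univ.filter fun ρ : Equiv.Perm (Fin (m + 2)) => Cons W ρ).card = 0 := by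
  rw [Finset.card_eq_zero, Finset.eq_empty_iff_forall_notMem]
  intro ρ hρ
  simp only [Finset.mem_filter, Finset.mem_univ, true_and] at hρ
  rw [cons_iff] at hρ
  have hp0 := mp_pos W
  have hper := (mp_dvd_iff (extW W) (mp (extW W))).1 dvd_rfl
  have hdvd := (mp_dvd_iff (extW W) (m + 2)).2 (extW_per W)
  have hper2 := (mp_dvd_iff (extW W) (2 * mp (extW W))).1 (Dvd.intro_left 2 rfl)
  rcases sg_cases (extW W) 0 (mp (extW W)) with hs | hs
  · have := extR_eq ρ _ _ (lemmaZ hρ (m + 2) (mp (extW W)) (by omega) (extR_per ρ) hper hs)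
    exact h1 (Nat.dvd_antisymm hdvd (Nat.dvd_of_mod_eq_zero (by simpa using this)))
  · have := extR_eq ρ _ _ (lemmaZ hρ (m + 2) (2 * mp (extW W)) (by omega) (extR_per ρ) hper2
      (by rw [sg_mul _ _ hper, hs]; norm_num))
    have h3 : m + 2 ∣ 2 * mp (extW W) := Nat.dvd_of_mod_eq_zero (by simpa using this)
    obtain ⟨e, he⟩ := hdvd
    rw [mul_comm 2] at h3
    rw [he] at h3
    have h4 : e ∣ 2 := Nat.dvd_of_mul_dvd_mul_left hp0 h3
    have h5 : e ≤ 2 := Nat.le_of_dvd (by norm_num) h4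
    interval_cases e
    · omega
    · omega
    · exact h2 ⟨by omega, hs⟩

theorem odd_moebius_sum (e : ℕ) (he : e ≠ 0) :
    ∑ d ∈ e.divisors.filter (fun d => Odd d), ArithmeticFunction.moebius d
      = if ∃ j : ℕ, e = 2 ^ j then 1 else 0 := by
  obtain ⟨k, m, hm, rfl⟩ := Nat.exists_eq_two_pow_mul_odd he
  have h1 : (2 ^ k * m).divisors.filter (fun d => Odd d) = m.divisors := by
    ext d
    simp only [Finset.mem_filter, Nat.mem_divisors]
    constructor
    · rintro ⟨⟨h1, h2⟩, h3⟩
      refine ⟨?_, by rintro rfl; simp at hm⟩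
      exact (Nat.Coprime.pow_right k (Nat.coprime_two_right.2 h3)).dvd_of_dvd_mul_left h1
    · rintro ⟨h1, h2⟩
      exact ⟨⟨h1.mul_left _, he⟩, hm.of_dvd_nat h1⟩
  rw [h1]
  have h2 : ∑ d ∈ m.divisors, ArithmeticFunction.moebius d
      = (1 : ArithmeticFunction ℤ) m := by
    rw [← ArithmeticFunction.moebius_mul_coe_zeta, ArithmeticFunction.coe_mul_zeta_apply]
  rw [h2, ArithmeticFunction.one_apply]
  congr 1
  apply propext
  constructor
  · rintro rfl; exact ⟨k, by simp⟩
  · rintro ⟨j, hj⟩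
    have : m ∣ 2 ^ j := hj ▸ Dvd.intro_left _ rfl
    obtain ⟨a, _, ha⟩ := (Nat.dvd_prime_pow Nat.prime_two).1 this
    rcases a with _ | a
    · simpa using ha
    · rw [ha] at hm
      exact absurd hm (by rw [Nat.not_odd_iff_even]; exact ⟨2 ^ a, by ring⟩)

theorem per_sum (m N q : ℕ) (hq0 : 0 < q) (hq : q ∣ m + 2) (F : (Fin q → Fin N) → ℤ) :
    ∑ W : Fin (m + 2) → Fin N, (if ∀ i, extW W (i + q) = extW W i then
      F (fun l => W (Fin.ofNat (m + 2) l)) else 0) = ∑ u : Fin q → Fin N, F u := by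
  rw [← Finset.sum_filter]
  have hle : q ≤ m + 2 := Nat.le_of_dvd (by omega) hq
  refine Finset.sum_bij' (fun W _ l => W (Fin.ofNat (m + 2) l))
    (fun u _ x => u ⟨x % q, Nat.mod_lt _ hq0⟩) ?_ ?_ ?_ ?_ ?_
  · intro W _; exact Finset.mem_univ _
  · intro u _
    simp only [Finset.mem_filter, Finset.mem_univ, true_and]
    intro i
    simp only [extW, Fin.val_ofNat, Nat.mod_mod_of_dvd _ hq, Nat.add_mod_right]
  · intro W hW
    simp only [Finset.mem_filter, Finset.mem_univ, true_and] at hW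
    funext x
    have hp : Function.Periodic (extW W) q := hW
    have := hp.map_mod_nat x
    simp only [extW] at this
    refine (Fin.ext this).trans ?_
    simp
  · intro u _
    funext l
    refine congrArg u (Fin.ext ?_)
    simp only [Fin.val_ofNat]
    rw [Nat.mod_eq_of_lt (lt_of_lt_of_le l.2 hle), Nat.mod_eq_of_lt l.2]
  · intro W _; rfl

theorem per_count (m N q : ℕ) (hq0 : 0 < q) (hq : q ∣ m + 2) :
    ∑ W : Fin (m + 2) → Fin N, (if ∀ i, extW W (i + q) = extW W i then (1 : ℤ) else 0) = (N : ℤ) ^ q := by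
  rw [per_sum m N q hq0 hq (fun _ => 1)]
  simp

theorem sum_eps (k : ℕ) : ∑ a : Fin (2 * k + 1), eps a = 1 := by
  rw [Fin.sum_univ_eq_sum_range (fun a => eps a)]
  induction k with
  | zero => simp [eps]
  | succ k ih =>
    rw [show 2 * (k + 1) + 1 = 2 * k + 1 + 1 + 1 by ring, Finset.sum_range_succ, Finset.sum_range_succ, ih]
    simp [eps, pow_succ]

theorem per_sg (m k q : ℕ) (hq0 : 0 < q) (hq : q ∣ m + 2) :
    ∑ W : Fin (m + 2) → Fin (2 * k + 1),
      (if ∀ i, extW W (i + q) = extW W i then sg (extW W) 0 q else 0) = 1 := by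
  have h := per_sum m (2 * k + 1) q hq0 hq (fun u => ∏ l, eps (u l))
  rw [← Fintype.sum_pow (fun a : Fin (2 * k + 1) => eps a) q, sum_eps, one_pow] at h
  rw [← h]
  refine Finset.sum_congr rfl fun W _ => ?_
  congr 1
  unfold sg extW
  simp only [zero_add]
  rw [← Fin.prod_univ_eq_prod_range (fun a => eps (W (Fin.ofNat (m + 2) a)))]

theorem nu_eq {m N : ℕ} (W : Fin (m + 2) → Fin N) :
    ((Finset.univ.filter fun ρ : Equiv.Perm (Fin (m + 2)) => Cons W ρ).card : ℤ)
      = ∑ d ∈ (m + 2).divisors.filter (fun d => Odd d), ArithmeticFunction.moebius d *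
        ((if ∀ i, extW W (i + (m + 2) / d) = extW W i then (1 : ℤ) else 0) -
         (if 2 ∣ m + 2 then (if ∀ i, extW W (i + (m + 2) / (2 * d)) = extW W i then
            sg (extW W) 0 ((m + 2) / (2 * d)) else 0) else 0)) := by
  have hp0 := mp_pos W
  have hper := (mp_dvd_iff (extW W) (mp (extW W))).1 dvd_rfl
  have hdvd := (mp_dvd_iff (extW W) (m + 2)).2 (extW_per W)
  obtain ⟨e, he⟩ := hdvd
  have he0 : e ≠ 0 := by rintro rfl; omega
  set w := extW W with hw
  set p := mp w with hp
  set s := sg w 0 p with hs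
  have hsc : s = 1 ∨ s = -1 := sg_cases _ _ _
  have key : ∀ d ∈ (m + 2).divisors.filter (fun d => Odd d), ArithmeticFunction.moebius d *
        ((if ∀ i, w (i + (m + 2) / d) = w i then (1 : ℤ) else 0) -
         (if 2 ∣ m + 2 then (if ∀ i, w (i + (m + 2) / (2 * d)) = w i then
            sg w 0 ((m + 2) / (2 * d)) else 0) else 0))
      = if d ∣ e then ArithmeticFunction.moebius d * (1 - if 2 ∣ e then s ^ (e / 2) else 0) else 0 := by
    intro d hd
    simp only [Finset.mem_filter, Nat.mem_divisors] at hd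
    obtain ⟨⟨hd1, -⟩, hd2⟩ := hd
    have hcop : Nat.Coprime 2 d := Nat.coprime_two_left.2 hd2
    have hd0 : 0 < d := hd2.pos
    have e1 : (∀ i, w (i + (m + 2) / d) = w i) ↔ d ∣ e := by
      rw [← mp_dvd_iff, Nat.dvd_div_iff_mul_dvd hd1, mul_comm d, he]
      exact Nat.mul_dvd_mul_iff_left hp0
    have e2 : 2 ∣ m + 2 → ((∀ i, w (i + (m + 2) / (2 * d)) = w i) ↔ 2 * d ∣ e) := by
      intro h2
      have h2d : 2 * d ∣ m + 2 := hcop.mul_dvd_of_dvd_of_dvd h2 hd1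
      rw [← mp_dvd_iff, Nat.dvd_div_iff_mul_dvd h2d, mul_comm (2 * d), he]
      exact Nat.mul_dvd_mul_iff_left hp0
    simp only [e1]
    by_cases hde : d ∣ e
    · simp only [hde, if_true]
      congr 2
      by_cases h2e : 2 ∣ e
      · have h2n : 2 ∣ m + 2 := he ▸ h2e.mul_left p
        have h2de : 2 * d ∣ e := hcop.mul_dvd_of_dvd_of_dvd h2e hde
        simp only [h2n, e2 h2n, h2de, h2e, if_true]
        obtain ⟨t, ht⟩ := h2de
        have e3 : (m + 2) / (2 * d) = t * p := by
          rw [he, ht]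
          apply Nat.div_eq_of_eq_mul_right (by omega)
          ring
        have e4 : e / 2 = d * t := by
          rw [ht, mul_assoc]; simp
        rw [e3, e4, sg_mul w p hper, pow_mul]
        congr 1
        rcases hsc with h | h <;> rw [← hs, h]
        · simp
        · rw [hd2.neg_one_pow]
      · simp only [h2e, if_false]
        split_ifs with h3 h4
        · rw [e2 h3] at h4
          exact absurd ((Dvd.intro _ rfl).trans h4) h2e
        · rfl
        · rfl
    · simp only [hde, if_false]
      split_ifs with h3 h4
      · rw [e2 h3] at h4
        exact absurd ((Dvd.intro_left _ rfl).trans h4) hde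
      · simp
      · simp
  rw [Finset.sum_congr rfl key, ← Finset.sum_filter]
  have hset : ((m + 2).divisors.filter (fun d => Odd d)).filter (fun d => d ∣ e)
      = e.divisors.filter (fun d => Odd d) := by
    ext d
    simp only [Finset.mem_filter, Nat.mem_divisors]
    constructor
    · rintro ⟨⟨_, h⟩, h'⟩; exact ⟨⟨h', he0⟩, h⟩
    · rintro ⟨⟨h', _⟩, h⟩; exact ⟨⟨⟨he ▸ h'.mul_left p, by omega⟩, h⟩, h'⟩
  rw [hset, ← Finset.sum_mul, odd_moebius_sum e he0]
  by_cases c1 : e = 1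
  · subst c1
    rw [nu_one W (by rw [← hw, ← hp]; omega)]
    have : ∃ j : ℕ, 1 = 2 ^ j := ⟨0, rfl⟩
    simp [this]
  have hn1 : mp (extW W) ≠ m + 2 := by
    rw [← hw, ← hp]
    intro h
    apply c1
    rw [← h] at he
    nlinarith
  by_cases c2 : e = 2
  · subst c2
    have : ∃ j : ℕ, 2 = 2 ^ j := ⟨1, rfl⟩
    rcases hsc with h | h
    · rw [nu_zero W hn1 (by rw [← hw, ← hp, ← hs, h]; norm_num)]
      simp [h]
    · rw [nu_two W (by rw [← hw, ← hp]; omega) (by rw [← hw, ← hp, ← hs, h])]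
      simp [h, this]
  · rw [nu_zero W hn1 (by
      rw [← hw, ← hp]
      rintro ⟨h, -⟩
      apply c2
      have : p * e = p * 2 := by omega
      exact Nat.eq_of_mul_eq_mul_left hp0 this)]
    split_ifs with h1 h2
    · obtain ⟨j, hj⟩ := h1
      rcases j with _ | _ | j
      · simp at hj; omega
      · simp at hj; omega
      · have : e / 2 = 2 * 2 ^ j := by rw [hj, pow_succ, pow_succ]; omega
        rw [this, pow_mul]
        rcases hsc with h | h <;> simp [h]
    · exfalso
      obtain ⟨j, hj⟩ := h1
      rcases j with _ | j
      · simp at hj; omega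
      · exact h2 (by rw [hj, pow_succ]; exact Dvd.intro_left _ rfl)
    · simp
    · simp

theorem cyc_formula (m k : ℕ) :
    ((m + 2 : ℕ) : ℤ) * ∑ π ∈ cyclicSet (m + 2), (Om (m + 2) k π : ℤ)
      = ∑ d ∈ (m + 2).divisors.filter (fun d => Odd d), ArithmeticFunction.moebius d *
        ((2 * k + 1 : ℤ) ^ ((m + 2) / d) - if 2 ∣ m + 2 then 1 else 0) := by
  have h := sum_cyc_Om m k
  have h' : ((m + 2 : ℕ) : ℤ) * ∑ π ∈ cyclicSet (m + 2), (Om (m + 2) k π : ℤ)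
     = ∑ W : Fin (m + 2) → Fin (2 * k + 1),
      ((Finset.univ.filter fun ρ : Equiv.Perm (Fin (m + 2)) => Cons W ρ).card : ℤ) := by
    exact_mod_cast h
  rw [h']
  simp only [nu_eq]
  rw [Finset.sum_comm]
  refine Finset.sum_congr rfl fun d hd => ?_
  simp only [Finset.mem_filter, Nat.mem_divisors] at hd
  obtain ⟨⟨hd1, -⟩, hd2⟩ := hd
  have hd0 : 0 < d := hd2.pos
  have hcop : Nat.Coprime 2 d := Nat.coprime_two_left.2 hd2
  rw [← Finset.mul_sum, Finset.sum_sub_distrib,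
    per_count _ _ _ (Nat.div_pos (Nat.le_of_dvd (by omega) hd1) hd0) (Nat.div_dvd_of_dvd hd1)]
  have e1 : (((2 * k + 1 : ℕ) : ℤ)) = 2 * k + 1 := by push_cast; ring
  rw [e1]
  congr 2
  · split_ifs with h2
    · have h2d : 2 * d ∣ m + 2 := hcop.mul_dvd_of_dvd_of_dvd h2 hd1
      exact per_sg _ _ _ (Nat.div_pos (Nat.le_of_dvd (by omega) h2d) (by omega))
        (Nat.div_dvd_of_dvd h2d)
    · simp

def uu : PowerSeries ℚ := (1 + PowerSeries.X)⁻¹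
def yy : PowerSeries ℚ := 4 * PowerSeries.X * uu ^ 2
def BB : PowerSeries ℚ := (1 - PowerSeries.X) * uu

theorem uu_mul : (1 + PowerSeries.X) * uu = 1 := PowerSeries.mul_inv_cancel _ (by simp)

theorem one_sub_yy : 1 - yy = BB ^ 2 := by
  unfold yy BB
  linear_combination (-(1 + PowerSeries.X) * uu - 1) * uu_mul

theorem yy_ne : yy ≠ 0 := by
  unfold yy
  have h : uu ≠ 0 := by
    intro h
    have := uu_mul
    rw [h] at this
    simp at this
  refine mul_ne_zero (mul_ne_zero ?_ PowerSeries.X_ne_zero) (pow_ne_zero _ h)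
  intro h4
  have := congrArg (PowerSeries.constantCoeff (R := ℚ)) h4
  rw [map_ofNat, map_zero] at this
  norm_num at this

theorem aeval_yy_injective : Function.Injective (Polynomial.aeval yy : Polynomial ℚ →ₐ[ℚ] PowerSeries ℚ) := by
  rw [injective_iff_map_eq_zero]
  intro q hq
  by_contra hne
  obtain ⟨r, hr, hr'⟩ := Polynomial.exists_eq_pow_rootMultiplicity_mul_and_not_dvd q hne 0
  rw [hr, map_mul, map_pow] at hq
  simp only [map_zero, sub_zero, Polynomial.aeval_X] at hq
  rcases mul_eq_zero.1 hq with h | h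
  · exact yy_ne (by by_contra h0; exact pow_ne_zero _ h0 h)
  · apply hr'
    simp only [map_zero, sub_zero]
    rw [Polynomial.X_dvd_iff]
    have h2 := congrArg (PowerSeries.constantCoeff (R := ℚ)) h
    rw [Polynomial.aeval_def, Polynomial.hom_eval₂] at h2
    have : PowerSeries.constantCoeff yy = 0 := by simp [yy]
    rw [this, Polynomial.eval₂_at_zero] at h2
    simpa using h2

theorem Om_gf2 (n : ℕ) (hn : 0 < n) (π : Equiv.Perm (Fin n)) :
    BB ^ n * (1 - PowerSeries.X) * PowerSeries.mk (fun k => (Om n k π : ℚ)) = yy ^ lpk n π := by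
  obtain ⟨m, rfl⟩ : ∃ m, n = m + 1 := ⟨n - 1, by omega⟩
  have h := Om_gf m π
  set L := lpk (m + 1) π
  set M := PowerSeries.mk (fun k => (Om (m + 1) k π : ℚ))
  have h1 : ((1 + PowerSeries.X) * uu) ^ (2 * L) = 1 := by rw [uu_mul, one_pow]
  have h2 : ((1 + PowerSeries.X) * uu) ^ (m + 1) = 1 := by rw [uu_mul, one_pow]
  unfold yy BB
  calc ((1 - PowerSeries.X) * uu) ^ (m + 1) * (1 - PowerSeries.X) * M
      = ((1 - PowerSeries.X) * uu) ^ (m + 1) * (1 - PowerSeries.X) * M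
        * ((1 + PowerSeries.X) * uu) ^ (2 * L) := by rw [h1, mul_one]
    _ = ((1 - PowerSeries.X) ^ (m + 2) * (1 + PowerSeries.X) ^ (2 * L) * M) * uu ^ (m + 1) * uu ^ (2 * L) := by
        rw [mul_pow, mul_pow]; ring
    _ = ((1 + PowerSeries.X) * uu) ^ (m + 1) * (4 * PowerSeries.X * uu ^ 2) ^ L := by
        rw [h, mul_pow (1 + PowerSeries.X) uu (m + 1), mul_pow _ (uu ^ 2)]; ring
    _ = _ := by rw [h2, one_mul]

theorem aeval_sum (n : ℕ) (hn : 0 < n) (s : Finset (Equiv.Perm (Fin n))) :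
    Polynomial.aeval yy (∑ π ∈ s, (Polynomial.X : Polynomial ℚ) ^ lpk n π)
      = BB ^ n * (1 - PowerSeries.X) * PowerSeries.mk (fun k => ∑ π ∈ s, (Om n k π : ℚ)) := by
  rw [map_sum]
  simp only [map_pow, Polynomial.aeval_X]
  rw [Finset.sum_congr rfl fun π _ => (Om_gf2 n hn π).symm, ← Finset.mul_sum]
  congr 1
  ext k
  simp

theorem aeval_P (n : ℕ) (hn : 0 < n) :
    Polynomial.aeval yy (leftPeakP n)
      = BB ^ n * (1 - PowerSeries.X) * PowerSeries.mk (fun k => (2 * k + 1 : ℚ) ^ n) := by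
  unfold leftPeakP
  rw [aeval_sum n hn]
  congr 2
  funext k
  exact_mod_cast sum_Om n k

theorem main_id (m : ℕ) :
    ((m + 2 : ℕ) : Polynomial ℚ) * ∑ π ∈ cyclicSet (m + 2), Polynomial.X ^ lpk (m + 2) π
      = ∑ d ∈ (m + 2).divisors.filter (fun d => Odd d),
        ((ArithmeticFunction.moebius d : ℤ) : Polynomial ℚ) *
          ((1 - Polynomial.X) ^ ((m + 2 - (m + 2) / d) / 2) * leftPeakP ((m + 2) / d)
            - if 2 ∣ m + 2 then (1 - Polynomial.X) ^ ((m + 2) / 2) else 0) := by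
  apply aeval_yy_injective
  rw [map_mul, aeval_sum _ (by omega), map_sum, map_natCast]
  have h1 : ((m + 2 : ℕ) : PowerSeries ℚ) * (BB ^ (m + 2) * (1 - PowerSeries.X) *
      PowerSeries.mk (fun k => ∑ π ∈ cyclicSet (m + 2), (Om (m + 2) k π : ℚ)))
      = BB ^ (m + 2) * (1 - PowerSeries.X) * ∑ d ∈ (m + 2).divisors.filter (fun d => Odd d),
        ((ArithmeticFunction.moebius d : ℤ) : PowerSeries ℚ) *
          (PowerSeries.mk (fun k => (2 * k + 1 : ℚ) ^ ((m + 2) / d))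
            - if 2 ∣ m + 2 then PowerSeries.mk (fun _ => 1) else 0) := by
    rw [mul_left_comm]
    congr 1
    ext k
    have h := cyc_formula m k
    have h' := congrArg (Int.cast (R := ℚ)) h
    rw [← map_natCast (PowerSeries.C (R := ℚ)), PowerSeries.coeff_C_mul, PowerSeries.coeff_mk, map_sum]
    push_cast at h'
    push_cast
    rw [h']
    refine Finset.sum_congr rfl fun d _ => ?_
    rw [← map_intCast (PowerSeries.C (R := ℚ)), PowerSeries.coeff_C_mul, map_sub, PowerSeries.coeff_mk]
    congr 2
    split_ifs <;> simp
  rw [h1, Finset.mul_sum]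
  refine Finset.sum_congr rfl fun d hd => ?_
  simp only [Finset.mem_filter, Nat.mem_divisors] at hd
  obtain ⟨⟨⟨q, hq⟩, -⟩, hd2⟩ := hd
  have hd0 : 0 < d := hd2.pos
  have e1 : (m + 2) / d = q := by rw [hq]; exact Nat.mul_div_cancel_left q hd0
  have hq0 : 0 < q := by
    rcases Nat.eq_zero_or_pos q with h | h
    · rw [h] at hq; omega
    · exact h
  rw [e1, map_mul, map_intCast, map_sub, map_mul, map_pow, map_sub, map_one, Polynomial.aeval_X,
    one_sub_yy, aeval_P q hq0, ← pow_mul]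
  have e2 : 2 * ((m + 2 - q) / 2) = m + 2 - q := by
    apply Nat.mul_div_cancel'
    obtain ⟨t, ht⟩ := hd2
    rw [hq, ht]
    exact ⟨t * q, by rw [add_mul, one_mul, Nat.add_sub_cancel]; ring⟩
  have e3 : q ≤ m + 2 := by rw [hq]; exact Nat.le_mul_of_pos_left q hd0
  have e4 : BB ^ (m + 2) = BB ^ (m + 2 - q) * BB ^ q := by rw [← pow_add]; congr 1; omega
  have e5 : (1 - PowerSeries.X) * PowerSeries.mk (fun _ => (1 : ℚ)) = 1 := by
    rw [mul_comm]; exact PowerSeries.mk_one_mul_one_sub_eq_one ℚ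
  rw [e2]
  split_ifs with h2
  · rw [map_pow, map_sub, map_one, Polynomial.aeval_X, one_sub_yy, ← pow_mul, Nat.mul_div_cancel' h2]
    rw [e4]
    linear_combination (-BB ^ (m + 2 - q) * BB ^ q * ((ArithmeticFunction.moebius d : ℤ) : PowerSeries ℚ)) * e5
  · rw [map_zero, e4]
    ring

theorem stmt8 (n : ℕ) (hn : 2 ≤ n) :
    ((∃ j : ℕ, n = 2 ^ j) →
      (n : Polynomial ℚ) * ∑ π ∈ cyclicSet n, Polynomial.X ^ lpk n π
        = leftPeakP n - (1 - Polynomial.X) ^ (n / 2)) ∧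
    (¬ (∃ j : ℕ, n = 2 ^ j) →
      (n : Polynomial ℚ) * ∑ π ∈ cyclicSet n, Polynomial.X ^ lpk n π
        = ∑ d ∈ n.divisors.filter (fun d => Odd d),
            ((ArithmeticFunction.moebius d : ℤ) : Polynomial ℚ)
              * (1 - Polynomial.X) ^ ((n - n / d) / 2) * leftPeakP (n / d)) := by
  obtain ⟨m, rfl⟩ : ∃ m, n = m + 2 := ⟨n - 2, by omega⟩
  rw [main_id m]
  constructor
  · rintro ⟨j, hj⟩
    have h2 : 2 ∣ m + 2 := by
      rcases j with _ | j
      · simp at hj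
      · rw [hj, pow_succ]; exact Dvd.intro_left _ rfl
    have hset : (m + 2).divisors.filter (fun d => Odd d) = {1} := by
      ext d
      simp only [Finset.mem_filter, Nat.mem_divisors, Finset.mem_singleton]
      constructor
      · rintro ⟨⟨h1, _⟩, h3⟩
        rw [hj] at h1
        exact Nat.eq_one_of_dvd_one
          ((Nat.Coprime.pow_right j (Nat.coprime_two_right.2 h3)).dvd_of_dvd_mul_left (by simpa using h1))
      · rintro rfl
        simp
    rw [hset]
    simp [h2]
  · intro hj
    simp only [mul_sub]
    rw [Finset.sum_sub_distrib, ← Finset.sum_mul]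
    have h := odd_moebius_sum (m + 2) (by omega)
    rw [if_neg hj] at h
    have h' : ∑ d ∈ (m + 2).divisors.filter (fun d => Odd d),
        ((ArithmeticFunction.moebius d : ℤ) : Polynomial ℚ) = 0 := by
      rw [← Int.cast_sum, h, Int.cast_zero]
    rw [h', zero_mul, sub_zero]
    refine Finset.sum_congr rfl fun d _ => ?_
    ring

end
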